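/- (Weak greedy algorithm: convergence of the error norms and ℓ²-summability.) In the weak greedy setting, the sequence (‖f_m‖)_{m≥0} is strictly decreasing and converges; for every m ≥ 1 one has w̃_m ≠ 0 and 2⟨f_{m−1}, w̃_m⟩ > ‖w̃_m‖², so that κ_m > 0 is well-defined; and κ_m² ‖w̃_m‖² = ‖f_{m−1}‖² − ‖f_m‖², so the series Σ_{m≥1} κ_m² ‖w̃_m‖² converges with sum at most ‖f_0‖². -/

import Mathlib

open scoped RealInnerProductSpace

/-- Weak greedy algorithm: the error norms `‖f_m‖` form a strictly decreasing convergent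
sequence; each correction `w̃_m` is nonzero with `2⟪f_{m-1}, w̃_m⟫ > ‖w̃_m‖²`, so that
`κ_m > 0`; `κ_m² ‖w̃_m‖² = ‖f_{m-1}‖² - ‖f_m‖²`; and the series `Σ κ_m² ‖w̃_m‖²` converges
with sum at most `‖f_0‖²`. -/
theorem weak_greedy_norms_converge {X : Type*}
    [NormedAddCommGroup X] [InnerProductSpace ℝ X] [CompleteSpace X]
    (S : Set X) (hS : S.Nonempty) (hScone : ∀ (c : ℝ), ∀ v ∈ S, c • v ∈ S)
    (u : X) (wt : ℕ → X) (hwtS : ∀ m : ℕ, wt (m + 1) ∈ S)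
    (ut : ℕ → X) (hut0 : ut 0 = 0) (hutrec : ∀ m : ℕ, ut (m + 1) = ut m + wt (m + 1))
    (f : ℕ → X) (hf : ∀ m : ℕ, f m = u - ut m)
    (γ : ℕ → ℝ) (hγ : ∀ m : ℕ, 0 ≤ γ (m + 1))
    (hquasi : ∀ m : ℕ, ‖f m - wt (m + 1)‖ ≤ (1 + γ (m + 1)) * Metric.infDist (f m) S)
    (hfpos : ∀ m : ℕ, 0 < ‖f m‖)
    (α : ℕ → ℝ) (hα : ∀ m : ℕ, α (m + 1) = Metric.infDist (f m) S / ‖f m‖)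
    (hcond : ∀ m : ℕ, (1 + γ (m + 1)) * α (m + 1) < 1)
    (κ : ℕ → ℝ)
    (hκ : ∀ m : ℕ, κ (m + 1) = Real.sqrt (2 * ⟪f m, wt (m + 1)⟫ / ‖wt (m + 1)‖ ^ 2 - 1)) :
    StrictAnti (fun m : ℕ => ‖f m‖) ∧
    (∃ L : ℝ, Filter.Tendsto (fun m : ℕ => ‖f m‖) Filter.atTop (nhds L)) ∧
    (∀ m : ℕ, wt (m + 1) ≠ 0) ∧
    (∀ m : ℕ, ‖wt (m + 1)‖ ^ 2 < 2 * ⟪f m, wt (m + 1)⟫) ∧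
    (∀ m : ℕ, 0 < κ (m + 1)) ∧
    (∀ m : ℕ, κ (m + 1) ^ 2 * ‖wt (m + 1)‖ ^ 2 = ‖f m‖ ^ 2 - ‖f (m + 1)‖ ^ 2) ∧
    Summable (fun m : ℕ => κ (m + 1) ^ 2 * ‖wt (m + 1)‖ ^ 2) ∧
    ∑' m : ℕ, κ (m + 1) ^ 2 * ‖wt (m + 1)‖ ^ 2 ≤ ‖f 0‖ ^ 2 := by
  have hstep (m : ℕ) : f (m + 1) = f m - wt (m + 1) := by
    rw [hf, hf, hutrec, sub_add_eq_sub_sub]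
  have hlt (m : ℕ) : ‖f (m + 1)‖ < ‖f m‖ := by
    have h := hcond m
    rw [hα, ← mul_div_assoc, div_lt_one (hfpos m)] at h
    rw [hstep]
    exact (hquasi m).trans_lt h
  have hanti : StrictAnti (fun m : ℕ => ‖f m‖) := strictAnti_nat_of_succ_lt hlt
  have hne (m : ℕ) : wt (m + 1) ≠ 0 := by
    intro h
    have := hlt m
    simp [hstep, h] at this
  have hexp (m : ℕ) :
      ‖f (m + 1)‖ ^ 2 = ‖f m‖ ^ 2 - 2 * ⟪f m, wt (m + 1)⟫ + ‖wt (m + 1)‖ ^ 2 := by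
    rw [hstep, norm_sub_sq_real]
  have hinner (m : ℕ) : ‖wt (m + 1)‖ ^ 2 < 2 * ⟪f m, wt (m + 1)⟫ := by
    have := pow_lt_pow_left₀ (hlt m) (norm_nonneg _) two_ne_zero
    linarith [hexp m]
  have hwpos (m : ℕ) : 0 < ‖wt (m + 1)‖ ^ 2 := pow_pos (norm_pos_iff.mpr (hne m)) 2
  have hrad (m : ℕ) : 0 < 2 * ⟪f m, wt (m + 1)⟫ / ‖wt (m + 1)‖ ^ 2 - 1 :=
    sub_pos.mpr ((one_lt_div (hwpos m)).mpr (hinner m))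
  have hid (m : ℕ) : κ (m + 1) ^ 2 * ‖wt (m + 1)‖ ^ 2 = ‖f m‖ ^ 2 - ‖f (m + 1)‖ ^ 2 := by
    rw [hκ, Real.sq_sqrt (hrad m).le, sub_mul, div_mul_cancel₀ _ (hwpos m).ne', hexp]
    ring
  have hnonneg (m : ℕ) : 0 ≤ κ (m + 1) ^ 2 * ‖wt (m + 1)‖ ^ 2 := by positivity
  have hpartial (n : ℕ) :
      ∑ m ∈ Finset.range n, κ (m + 1) ^ 2 * ‖wt (m + 1)‖ ^ 2 ≤ ‖f 0‖ ^ 2 := by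
    simp_rw [hid]
    rw [Finset.sum_range_sub' (fun m => ‖f m‖ ^ 2)]
    exact sub_le_self _ (sq_nonneg _)
  exact ⟨hanti,
    ⟨_, tendsto_atTop_ciInf hanti.antitone ⟨0, Set.forall_mem_range.mpr fun _ => norm_nonneg _⟩⟩,
    hne, hinner, fun m => hκ m ▸ Real.sqrt_pos.mpr (hrad m), hid,
    summable_of_sum_range_le hnonneg hpartial, Real.tsum_le_of_sum_range_le hnonneg hpartial⟩
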